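/- Let M ⊆ W × F be the set of pairs (w,f) such that some stable matching μ of the matching problem satisfies μ(w) = f, and assume the matching problem has at least one stable matching. Then a pair (w,f) belongs to the normal form S* if and only if (w,f) ∈ M, or there exist pairs (w,f₁), (w,f₂), (w₁,f), (w₂,f) ∈ M with f₁ ≻_w f ≻_w f₂ and w₁ ≻_f w ≻_f w₂. -/

import Mathlib

/-- `(w,f)` blocks the matching `μ`: `f ≻_w μ(w)` and `w ≻_f μ⁻¹(f)`.
`prefW w f f'` means worker `w` strictly prefers firm `f` to firm `f'`;
`prefF f w w'` means firm `f` strictly prefers worker `w` to worker `w'`. -/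
def Blocks {W F : Type*} (prefW : W → F → F → Prop) (prefF : F → W → W → Prop)
    (μ : W ≃ F) (w : W) (f : F) : Prop :=
  prefW w f (μ w) ∧ prefF f w (μ.symm f)

/-- A matching is stable if no pair blocks it. -/
def IsStableMatching {W F : Type*} (prefW : W → F → F → Prop)
    (prefF : F → W → W → Prop) (μ : W ≃ F) : Prop :=
  ∀ w f, ¬ Blocks prefW prefF μ w f

/-- A pair `(w,f)` is unattractive in `S`. -/
def Unattractive {W F : Type*} (prefW : W → F → F → Prop) (prefF : F → W → W → Prop)
    (S : Set (W × F)) (w : W) (f : F) : Prop :=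
  (∃ f', (w, f') ∈ S ∧ prefW w f' f ∧
      ∀ w', w' ≠ w → (w', f') ∈ S → prefF f' w w') ∨
  (∃ w', (w', f) ∈ S ∧ prefF f w' w ∧
      ∀ f'', f'' ≠ f → (w', f'') ∈ S → prefW w' f f'')

/-- `delta S` is `S` with all pairs unattractive in `S` removed. -/
def delta {W F : Type*} (prefW : W → F → F → Prop) (prefF : F → W → W → Prop)
    (S : Set (W × F)) : Set (W × F) :=
  {p ∈ S | ¬ Unattractive prefW prefF S p.1 p.2}

/-- The normal form: the fixed point of `delta` reached by iterating from `W × F`.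
Since `delta S ⊆ S` and `W × F` is finite, `Fintype.card (W × F)` iterations suffice. -/
def NormalForm (W F : Type*) [Fintype W] [Fintype F]
    (prefW : W → F → F → Prop) (prefF : F → W → W → Prop) : Set (W × F) :=
  (delta prefW prefF)^[Fintype.card (W × F)] Set.univ

/-- `μ` is `S`-stable: `S`-admissible and no pair of `S` blocks it within `S`. -/
def SStable {W F : Type*} (prefW : W → F → F → Prop) (prefF : F → W → W → Prop)
    (S : Set (W × F)) (μ : W ≃ F) : Prop :=
  (∀ w, (w, μ w) ∈ S) ∧
  ∀ w f, (w, f) ∈ S → ¬ (prefW w f (μ w) ∧ prefF f w (μ.symm f))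

/-- Arcs of the matching digraph `D(S)`: from `(w,f)` to `(w,f')` whenever `f' ≻_w f`,
and from `(w,f)` to `(w',f)` whenever `w' ≻_f w`. -/
def Arc {W F : Type*} (prefW : W → F → F → Prop) (prefF : F → W → W → Prop)
    (S : Set (W × F)) (p q : W × F) : Prop :=
  p ∈ S ∧ q ∈ S ∧
    ((p.1 = q.1 ∧ prefW p.1 q.2 p.2) ∨ (p.2 = q.2 ∧ prefF p.2 q.1 p.1))

/-- `D(S)` contains a directed cycle: distinct vertices `c 0, …, c (n-1)` with `n ≥ 1`,
`c n = c 0`, and an arc from each vertex to the next. -/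
def HasDirectedCycle {W F : Type*} (prefW : W → F → F → Prop)
    (prefF : F → W → W → Prop) (S : Set (W × F)) : Prop :=
  ∃ (n : ℕ) (c : Fin (n + 1) → W × F), 0 < n ∧
    Function.Injective (fun i : Fin n => c i.castSucc) ∧
    c (Fin.last n) = c 0 ∧
    ∀ i : Fin n, Arc prefW prefF S (c i.castSucc) (c i.succ)

/-- The preference lists possess a cycle: there are `k ≥ 2`, distinct workers
`w_1, …, w_k` and distinct firms `f_1, …, f_k` (indexed by `ZMod k`) with
`f_{j+1} ≻_{w_j} f_j` and `w_j ≻_{f_j} w_{j-1}` for all `j`, indices modulo `k`. -/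
def PrefCycle {W F : Type*} (prefW : W → F → F → Prop)
    (prefF : F → W → W → Prop) : Prop :=
  ∃ k : ℕ, 2 ≤ k ∧ ∃ (ws : ZMod k → W) (fs : ZMod k → F),
    Function.Injective ws ∧ Function.Injective fs ∧
    ∀ j : ZMod k, prefW (ws j) (fs (j + 1)) (fs j) ∧ prefF (fs j) (ws j) (ws (j - 1))

section StableMatching

variable {W F : Type*} {prefW : W → F → F → Prop} {prefF : F → W → W → Prop}
  {S : Set (W × F)}

/-- Every nonempty set has a best element for a strict total order on a finite type. -/
lemma exists_best {α : Type*} [Finite α] (r : α → α → Prop) (hr : IsStrictTotalOrder α r)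
    (s : Set α) (hs : s.Nonempty) : ∃ a ∈ s, ∀ b ∈ s, b = a ∨ r a b := by
  obtain ⟨a, ha, hmin⟩ := (Finite.wellFounded_of_trans_of_irrefl r).has_min s hs
  refine ⟨a, ha, fun b hb => ?_⟩
  by_contra! h
  exact h.1 (hr.trichotomous b a (hmin b hb) h.2)

lemma delta_subset : delta prefW prefF S ⊆ S := fun _ h => h.1

/-- Exchanging the roles of workers and firms preserves unattractiveness. -/
lemma unattractive_swap (w : W) (f : F) :
    Unattractive prefF prefW (Prod.swap ⁻¹' S) f w ↔ Unattractive prefW prefF S w f :=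
  or_comm

/-- The normal form is a fixed point of `delta`. -/
lemma delta_normalForm [Fintype W] [Fintype F] :
    delta prefW prefF (NormalForm W F prefW prefF) = NormalForm W F prefW prefF := by
  have key : ∀ k : ℕ,
      delta prefW prefF ((delta prefW prefF)^[k] Set.univ) = (delta prefW prefF)^[k] Set.univ ∨
        ((delta prefW prefF)^[k] Set.univ).ncard + k ≤ Fintype.card (W × F) := by
    intro k
    induction k with
    | zero =>
      right
      simp [Set.ncard_univ]
    | succ k ih =>
      rw [Function.iterate_succ_apply']
      by_cases hfix : delta prefW prefF ((delta prefW prefF)^[k] Set.univ) =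
          (delta prefW prefF)^[k] Set.univ
      · left
        rw [hfix, hfix]
      · right
        have hlt := Set.ncard_lt_ncard
          ((delta_subset (prefW := prefW) (prefF := prefF)).ssubset_of_ne hfix) (Set.toFinite _)
        have := ih.resolve_left hfix
        omega
  rcases key (Fintype.card (W × F)) with h | h
  · exact h
  · have hempty : NormalForm W F prefW prefF = ∅ :=
      (Set.ncard_eq_zero (Set.toFinite _)).1 (by unfold NormalForm; omega)
    exact Set.subset_eq_empty (delta_subset.trans hempty.subset) rfl |>.trans hempty.symm

/-- A pair that a worker weakly prefers to a stable partner is not removed on account of a firm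
which ranks that worker best. -/
lemma not_exists_better_firm (hW : ∀ w, IsStrictTotalOrder F (prefW w))
    {μ : W ≃ F} (hμ : IsStableMatching prefW prefF μ) (hμS : ∀ w, (w, μ w) ∈ S)
    {w : W} {f : F} (hf : f = μ w ∨ prefW w f (μ w)) :
    ¬ ∃ f', (w, f') ∈ S ∧ prefW w f' f ∧ ∀ w', w' ≠ w → (w', f') ∈ S → prefF f' w w' := by
  rintro ⟨f', -, hpref, hbest⟩
  have hlt : prefW w f' (μ w) := by
    rcases hf with rfl | hf
    · exact hpref
    · exact (hW w).trans _ _ _ hpref hf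
  refine hμ w f' ⟨hlt, hbest _ ?_ (by simpa using hμS (μ.symm f'))⟩
  rintro rfl
  rw [μ.apply_symm_apply] at hlt
  exact (hW _).irrefl _ hlt

lemma IsStableMatching.symm {μ : W ≃ F} (hμ : IsStableMatching prefW prefF μ) :
    IsStableMatching prefF prefW μ.symm :=
  fun f w h => hμ w f ⟨h.2, h.1⟩

/-- A pair of `S` removed on account of a better firm does not block a matching that is stable
in `delta S`. -/
lemma SStable.not_blocks_of_better_firm [Finite F] (hW : ∀ w, IsStrictTotalOrder F (prefW w))
    (hF : ∀ f, IsStrictTotalOrder W (prefF f)) {μ : W ≃ F}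
    (hμ : SStable prefW prefF (delta prefW prefF S) μ) {w : W} {f : F}
    (hf : ∃ f', (w, f') ∈ S ∧ prefW w f' f ∧ ∀ w', w' ≠ w → (w', f') ∈ S → prefF f' w w') :
    ¬ prefW w f (μ w) := by
  intro hblock
  obtain ⟨f', ⟨hS, hpref, hbest⟩, hmax⟩ := exists_best (prefW w) (hW w)
    {f' | (w, f') ∈ S ∧ prefW w f' f ∧ ∀ w', w' ≠ w → (w', f') ∈ S → prefF f' w w'} hf
  have hlt : prefW w f' (μ w) := (hW w).trans _ _ _ hpref hblock
  refine hμ.2 w f' ⟨hS, ?_⟩ ⟨hlt, hbest _ ?_ ?_⟩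
  · rintro (⟨f'', hS'', hpref'', hbest''⟩ | ⟨w', hS', hpref', -⟩)
    · rcases hmax f'' ⟨hS'', (hW w).trans _ _ _ hpref'' hpref, hbest''⟩ with rfl | h
      · exact (hW w).irrefl _ hpref''
      · exact (hW w).irrefl _ ((hW w).trans _ _ _ h hpref'')
    · have hne : w' ≠ w := by
        rintro rfl
        exact (hF _).irrefl _ hpref'
      exact (hF f').irrefl _ ((hF f').trans _ _ _ hpref' (hbest w' hne hS'))
  · rintro rfl
    rw [μ.apply_symm_apply] at hlt
    exact (hW _).irrefl _ hlt
  · simpa using (hμ.1 (μ.symm f')).1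

lemma SStable.symm {μ : W ≃ F} (hμ : SStable prefW prefF S μ) :
    SStable prefF prefW (Prod.swap ⁻¹' S) μ.symm :=
  ⟨fun f => by simpa using hμ.1 (μ.symm f), fun f w hS h => hμ.2 w f hS ⟨h.2, h.1⟩⟩

lemma delta_swap : delta prefF prefW (Prod.swap ⁻¹' S) = Prod.swap ⁻¹' delta prefW prefF S := by
  ext ⟨f, w⟩
  exact and_congr_right fun _ => not_congr (unattractive_swap w f)

lemma SStable.of_delta [Finite W] [Finite F] (hW : ∀ w, IsStrictTotalOrder F (prefW w))
    (hF : ∀ f, IsStrictTotalOrder W (prefF f)) {μ : W ≃ F}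
    (hμ : SStable prefW prefF (delta prefW prefF S) μ) : SStable prefW prefF S μ := by
  refine ⟨fun w => (hμ.1 w).1, fun w f hS hblock => ?_⟩
  by_cases hun : Unattractive prefW prefF S w f
  · rcases hun with hun | hun
    · exact hμ.not_blocks_of_better_firm hW hF hun hblock.1
    · have hμ' := hμ.symm
      rw [← delta_swap] at hμ'
      exact hμ'.not_blocks_of_better_firm hF hW hun hblock.2
  · exact hμ.2 w f ⟨hS, hun⟩ hblock

/-- A matching that is stable in the normal form is stable. -/
lemma SStable.isStableMatching [Fintype W] [Fintype F]
    (hW : ∀ w, IsStrictTotalOrder F (prefW w)) (hF : ∀ f, IsStrictTotalOrder W (prefF f))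
    {μ : W ≃ F} (hμ : SStable prefW prefF (NormalForm W F prefW prefF) μ) :
    IsStableMatching prefW prefF μ := by
  have key : ∀ k : ℕ, SStable prefW prefF ((delta prefW prefF)^[k] Set.univ) μ →
      SStable prefW prefF Set.univ μ := by
    intro k
    induction k with
    | zero => exact id
    | succ k ih =>
      rw [Function.iterate_succ_apply']
      exact fun h => ih (h.of_delta hW hF)
  exact fun w f => (key _ hμ).2 w f trivial

/-- In a fixed point of `delta`, matching every firm with its best worker is a matching, which
gives every worker its worst firm. -/
lemma exists_firm_optimal [Fintype W] [Fintype F] (hcard : Fintype.card W = Fintype.card F)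
    (hW : ∀ w, IsStrictTotalOrder F (prefW w)) (hF : ∀ f, IsStrictTotalOrder W (prefF f))
    (hfix : delta prefW prefF S = S) (hne : ∀ f, ∃ w, (w, f) ∈ S) :
    ∃ μ : W ≃ F, (∀ w, (w, μ w) ∈ S) ∧
      ∀ w f, (w, f) ∈ S → (w = μ.symm f ∨ prefF f (μ.symm f) w) ∧
        (f = μ w ∨ prefW w f (μ w)) := by
  choose b hbS hb using fun f => exists_best (prefF f) (hF f) {w | (w, f) ∈ S} (hne f)
  have hworst : ∀ f f', (b f', f) ∈ S → ¬ prefW (b f') f' f := by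
    intro f f' hS hpref
    rw [← hfix] at hS
    exact hS.2 (Or.inl ⟨f', hbS f', hpref, fun w' hw' hS' => (hb f' w' hS').resolve_left hw'⟩)
  have hinj : Function.Injective b := by
    intro f f' h
    exact (hW (b f)).trichotomous f f' (hworst f' f (h ▸ hbS f'))
      (h ▸ hworst f f' (h ▸ hbS f))
  have hbij : Function.Bijective b :=
    (Fintype.bijective_iff_injective_and_card b).2 ⟨hinj, hcard.symm⟩
  let e := Equiv.ofBijective b hbij
  have he : ∀ w, b (e.symm w) = w := e.apply_symm_apply
  refine ⟨e.symm, fun w => ?_, fun w f hS => ⟨hb f w hS, ?_⟩⟩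
  · simpa [he] using hbS (e.symm w)
  · by_contra! h
    have := hworst f (e.symm w) (by rwa [he])
    rw [he] at this
    exact h.1 ((hW w).trichotomous _ _ h.2 this)

end StableMatching

/-- A pair belongs to the normal form iff it is part of some stable matching or
is "surrounded" by pairs that are part of stable matchings. -/
theorem normalForm_mem_iff {W F : Type*} [Fintype W] [Fintype F] [Nonempty W]
    (hcard : Fintype.card W = Fintype.card F)
    (prefW : W → F → F → Prop) (prefF : F → W → W → Prop)
    (hW : ∀ w, IsStrictTotalOrder F (prefW w))
    (hF : ∀ f, IsStrictTotalOrder W (prefF f))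
    (hex : ∃ μ : W ≃ F, IsStableMatching prefW prefF μ)
    (M : Set (W × F))
    (hM : M = {p : W × F | ∃ μ : W ≃ F, IsStableMatching prefW prefF μ ∧ μ p.1 = p.2})
    (w : W) (f : F) :
    (w, f) ∈ NormalForm W F prefW prefF ↔
      (w, f) ∈ M ∨
      ∃ f₁ f₂ w₁ w₂, (w, f₁) ∈ M ∧ (w, f₂) ∈ M ∧ (w₁, f) ∈ M ∧ (w₂, f) ∈ M ∧
        prefW w f₁ f ∧ prefW w f f₂ ∧ prefF f w₁ w ∧ prefF f w w₂ := by
  have hpair : ∀ {μ : W ≃ F}, IsStableMatching prefW prefF μ → ∀ w, (w, μ w) ∈ M := by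
    rintro μ hμ w
    rw [hM]
    exact ⟨μ, hμ, rfl⟩
  have hsub : ∀ k : ℕ, ∀ w f, ((w, f) ∈ M ∨
      ∃ f₁ f₂ w₁ w₂, (w, f₁) ∈ M ∧ (w, f₂) ∈ M ∧ (w₁, f) ∈ M ∧ (w₂, f) ∈ M ∧
        prefW w f₁ f ∧ prefW w f f₂ ∧ prefF f w₁ w ∧ prefF f w w₂) →
      (w, f) ∈ (delta prefW prefF)^[k] Set.univ := by
    intro k
    induction k with
    | zero => exact fun _ _ _ => trivial
    | succ k ih =>
      intro w f h
      rw [Function.iterate_succ_apply']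
      have hS : ∀ {μ : W ≃ F}, IsStableMatching prefW prefF μ →
          ∀ w, (w, μ w) ∈ (delta prefW prefF)^[k] Set.univ :=
        fun hμ w => ih _ _ (Or.inl (hpair hμ w))
      have hS' : ∀ {μ : W ≃ F}, IsStableMatching prefW prefF μ →
          ∀ f, (f, μ.symm f) ∈ Prod.swap ⁻¹' ((delta prefW prefF)^[k] Set.univ) :=
        fun {μ} hμ f => by simpa using hS hμ (μ.symm f)
      have hbetter : (∃ μ : W ≃ F, IsStableMatching prefW prefF μ ∧
            (f = μ w ∨ prefW w f (μ w))) ∧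
          ∃ μ : W ≃ F, IsStableMatching prefW prefF μ ∧
            (w = μ.symm f ∨ prefF f w (μ.symm f)) := by
        simp only [hM, Set.mem_ofPred_eq] at h
        rcases h with ⟨μ, hμ, rfl⟩ | ⟨-, f₂, -, w₂, -, ⟨μ, hμ, rfl⟩, -, ⟨ν, hν, rfl⟩, -, hf, -, hw⟩
        · exact ⟨⟨μ, hμ, Or.inl rfl⟩, μ, hμ, Or.inl (by simp)⟩
        · exact ⟨⟨μ, hμ, Or.inr hf⟩, ν, hν, Or.inr (by simpa using hw)⟩
      obtain ⟨⟨μ, hμ, hf⟩, ν, hν, hw⟩ := hbetter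
      refine ⟨ih w f h, ?_⟩
      rintro (hun | hun)
      · exact not_exists_better_firm hW hμ (hS hμ) hf hun
      · exact not_exists_better_firm hF hν.symm (hS' hν) hw hun
  refine ⟨fun hmem => ?_, hsub _ w f⟩
  obtain ⟨μ₀, hμ₀⟩ := hex
  have hrow : ∀ w, (w, μ₀ w) ∈ NormalForm W F prefW prefF :=
    fun w => hsub _ _ _ (Or.inl (hpair hμ₀ w))
  obtain ⟨μ, hμS, hμ⟩ := exists_firm_optimal hcard hW hF delta_normalForm
    fun f => ⟨μ₀.symm f, by simpa using hrow (μ₀.symm f)⟩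
  obtain ⟨ν, hνS, hν⟩ := exists_firm_optimal (S := Prod.swap ⁻¹' NormalForm W F prefW prefF)
    hcard.symm hF hW (by rw [delta_swap, delta_normalForm]) fun w => ⟨μ₀ w, hrow w⟩
  have hμst : IsStableMatching prefW prefF μ := by
    refine SStable.isStableMatching hW hF ⟨hμS, fun w f hS h => ?_⟩
    rcases (hμ w f hS).1 with hw | hw
    · exact (hF f).irrefl _ (hw ▸ h.2)
    · exact (hF f).irrefl _ ((hF f).trans _ _ _ hw h.2)
  have hνst : IsStableMatching prefW prefF ν.symm := by
    refine SStable.isStableMatching hW hF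
      ⟨fun w => by simpa using hνS (ν.symm w), fun w f hS h => ?_⟩
    rcases (hν f w hS).1 with hf | hf
    · exact (hW w).irrefl _ (hf ▸ h.1)
    · exact (hW w).irrefl _ ((hW w).trans _ _ _ hf h.1)
  by_cases hfM : (w, f) ∈ M
  · exact Or.inl hfM
  have hne : f ≠ μ w := by
    rintro rfl
    exact hfM (hpair hμst w)
  have hne' : f ≠ ν.symm w := by
    rintro rfl
    exact hfM (hpair hνst w)
  obtain ⟨hw₁, hf₂⟩ := hμ w f hmem
  obtain ⟨hf₁, hw₂⟩ := hν f w hmem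
  refine Or.inr ⟨ν.symm w, μ w, μ.symm f, ν f, hpair hνst w, hpair hμst w, ?_, ?_,
    hf₁.resolve_left hne', hf₂.resolve_left hne, hw₁.resolve_left ?_, hw₂.resolve_left ?_⟩
  · simpa using hpair hμst (μ.symm f)
  · simpa using hpair hνst (ν f)
  · rintro rfl
    simp at hne
  · rintro rfl
    simp at hne'
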